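/- Yee's sufficient TVD criterion for symmetric-type fluxes (the criterion used to prove Theorem 1): Let θ ∈ [0,1) and suppose λ|a| < 1/(1−θ); set K = 2/(λ(1−θ)|a|) − 2. To each grid function w and each interface assign a limiter value Q_{j+1/2}(w) and define the flux f̂_{j+1/2}(w) = (1/2)[a(w_j + w_{j+1}) − |a|(1 − Q_{j+1/2}(w))·Δ_{j+1/2}w]. Assume that for each w ∈ {u, v} and all j: (i) 0 ≤ Q_{j+1/2}(w) ≤ 2; (ii) Q_{j+1/2}(w) = 0 whenever Δ_{j+1/2}w·Δ_{j+3/2}w ≤ 0 or Δ_{j+1/2}w·Δ_{j−1/2}w ≤ 0; (iii) Q_{j+1/2}(w)·Δ_{j+1/2}w / Δ_{j+3/2}w ≤ K whenever Δ_{j+3/2}w ≠ 0, and Q_{j+1/2}(w)·Δ_{j+1/2}w / Δ_{j−1/2}w ≤ K whenever Δ_{j−1/2}w ≠ 0. If u and v satisfy the θ-scheme v_j = u_j − λ(1−θ)[f̂_{j+1/2}(u) − f̂_{j−1/2}(u)] − λθ[f̂_{j+1/2}(v) − f̂_{j−1/2}(v)] for all j ∈ ℤ (with TV(v) < ∞ when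 θ > 0), then TV(v) ≤ TV(u). -/

import Mathlib

/-- Total variation of a grid function `u : ℤ → ℝ`, a value in `[0, ∞]`. -/
noncomputable def TV (u : ℤ → ℝ) : ENNReal :=
  ∑' j : ℤ, ENNReal.ofReal |u (j + 1) - u j|

/-- Symmetric-type numerical flux with limiter `Q`:
`f̂_{j+1/2}(w) = (1/2)[a(w_j + w_{j+1}) − |a|(1 − Q_{j+1/2}(w))·Δ_{j+1/2}w]`. -/
noncomputable def yeeFlux (a : ℝ) (Q : (ℤ → ℝ) → ℤ → ℝ) (w : ℤ → ℝ) (j : ℤ) : ℝ :=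
  (1 / 2) * (a * (w j + w (j + 1)) - |a| * (1 - Q w j) * (w (j + 1) - w j))

/-!
Put `σ = sign a`. Differencing the scheme turns it into a conservation law for the increments of
the solution, `Δv + (F - F(· - σ)) = Δu - (G - G(· - σ))`, in which `F` and `G` are nonnegative
multiples of limited increments of `v` and `u`. The limiter conditions make `F` point in the
direction of `Δv`, so that `|Δv + F| = |Δv| + |F|`, and place `G` between `0` and `Δu`, so that
`|Δu - G| + |G| = |Δu|`. Summing the triangle inequality over all interfaces gives
`TV v + ∑ |F| ≤ ∑ |F| + TV u`, and `∑ |F|` cancels because `TV v` is finite whenever `θ > 0`, while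
`F = 0` for `θ = 0`.
-/

open scoped fwdDiff

section Telescoping

variable {ι E : Type*} [NormedAddCommGroup E] [NormedSpace ℝ E]

theorem enorm_add_of_sameRay {x y : E} (h : SameRay ℝ x y) : ‖x + y‖ₑ = ‖x‖ₑ + ‖y‖ₑ := by
  rw [← ofReal_norm, ← ofReal_norm, ← ofReal_norm, h.norm_add,
    ENNReal.ofReal_add (norm_nonneg x) (norm_nonneg y)]

theorem tsum_enorm_le_of_telescoping (e : Equiv.Perm ι) {p q F G : ι → E}
    (hF : ∀ j, SameRay ℝ (p j) (F j)) (hG : ∀ j, SameRay ℝ (q j - G j) (G j))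
    (hfin : ∑' j, ‖F j‖ₑ ≠ ⊤) (h : ∀ j, p j + (F j - F (e j)) = q j - (G j - G (e j))) :
    ∑' j, ‖p j‖ₑ ≤ ∑' j, ‖q j‖ₑ := by
  have pointwise (j : ι) :
      ‖p j‖ₑ + ‖F j‖ₑ ≤ ‖q j - G j‖ₑ + ‖G (e j)‖ₑ + ‖F (e j)‖ₑ := by
    have hpF : p j + F j = q j - G j + G (e j) + F (e j) := by
      rw [sub_add, ← h j, add_assoc, sub_add_cancel]
    rw [← enorm_add_of_sameRay (hF j), hpF]
    exact (enorm_add_le (q j - G j + G (e j)) (F (e j))).trans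
      (add_le_add_left (enorm_add_le (q j - G j) (G (e j))) _)
  refine (ENNReal.add_le_add_iff_right hfin).1 ?_
  calc ∑' j, ‖p j‖ₑ + ∑' j, ‖F j‖ₑ
      = ∑' j, (‖p j‖ₑ + ‖F j‖ₑ) := ENNReal.tsum_add.symm
    _ ≤ ∑' j, (‖q j - G j‖ₑ + ‖G (e j)‖ₑ + ‖F (e j)‖ₑ) := ENNReal.tsum_le_tsum pointwise
    _ = ∑' j, (‖q j - G j‖ₑ + ‖G j‖ₑ) + ∑' j, ‖F j‖ₑ := by
      rw [ENNReal.tsum_add, ENNReal.tsum_add, ENNReal.tsum_add, e.tsum_eq (fun j => ‖G j‖ₑ),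
        e.tsum_eq (fun j => ‖F j‖ₑ)]
    _ = ∑' j, ‖q j‖ₑ + ∑' j, ‖F j‖ₑ := by
      simp only [← enorm_add_of_sameRay (hG _), sub_add_cancel]

end Telescoping

theorem TV_eq_tsum_enorm (w : ℤ → ℝ) : TV w = ∑' j, ‖Δ_[1] w j‖ₑ := by
  simp only [TV, fwdDiff, Real.enorm_eq_ofReal_abs]

/-- The limiter conditions that the upwind side imposes on the interface values `q` at `w`; the
offset `σ` points downstream, so the upwind neighbour of the interface `j + 1/2` is
`j - σ + 1/2`. -/
structure IsUpwindLimiter (σ : ℤ) (q w : ℤ → ℝ) : Prop where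
  nonneg (j : ℤ) : 0 ≤ q j
  le_two (j : ℤ) : q j ≤ 2
  eq_zero (j : ℤ) : Δ_[1] w j * Δ_[1] w (j - σ) ≤ 0 → q j = 0

/-- The increment `Δ_{j+1/2} w` with its antidiffusive part `q Δw / 2` exchanged for that of the
downstream interface `j + σ + 1/2`. For `σ = sign a`, its difference along `σ`, times `|a|`, is the
second difference of Yee's flux. -/
noncomputable def limitedIncrement (σ : ℤ) (q w : ℤ → ℝ) (j : ℤ) : ℝ :=
  Δ_[1] w j - q j * Δ_[1] w j / 2 + q (j + σ) * Δ_[1] w (j + σ) / 2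

theorem fwdDiff_yeeFlux_sub (a : ℝ) (Q : (ℤ → ℝ) → ℤ → ℝ) (w : ℤ → ℝ) (j : ℤ) :
    Δ_[1] (fun i => yeeFlux a Q w i - yeeFlux a Q w (i - 1)) j =
      |a| * (limitedIncrement (SignType.sign a) (Q w) w j -
        limitedIncrement (SignType.sign a) (Q w) w (j - SignType.sign a)) := by
  rcases lt_trichotomy a 0 with ha | rfl | ha
  · simp only [fwdDiff, yeeFlux, limitedIncrement, abs_of_neg ha, sign_neg ha,
      SignType.coe_neg_one, sub_neg_eq_add, ← sub_eq_add_neg, add_sub_cancel_right,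
      sub_add_cancel]
    ring
  · simp [fwdDiff, yeeFlux]
  · simp only [fwdDiff, yeeFlux, limitedIncrement, abs_of_pos ha, sign_pos ha,
      SignType.coe_one, add_sub_cancel_right, sub_add_cancel]
    ring

namespace IsUpwindLimiter

variable {σ : ℤ} {q w : ℤ → ℝ}

theorem downstream_mul_nonneg (hq : IsUpwindLimiter σ q w) (j : ℤ) :
    0 ≤ q (j + σ) * Δ_[1] w (j + σ) / Δ_[1] w j := by
  rcases le_or_gt (Δ_[1] w (j + σ) * Δ_[1] w j) 0 with h | h
  · rw [hq.eq_zero (j + σ) (by rwa [add_sub_cancel_right]), zero_mul, zero_div]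
  · rw [mul_div_assoc]
    exact mul_nonneg (hq.nonneg _) (div_nonneg_iff.2 (mul_nonneg_iff.1 h.le))

theorem exists_limitedIncrement_eq_mul (hq : IsUpwindLimiter σ q w) {κ : ℝ} (hκ : 0 ≤ κ)
    (hbound : ∀ j, Δ_[1] w (j - σ) ≠ 0 → κ * (2 + q j * Δ_[1] w j / Δ_[1] w (j - σ)) ≤ 2)
    (j : ℤ) : ∃ c, 0 ≤ c ∧ κ * c ≤ 1 ∧ limitedIncrement σ q w j = c * Δ_[1] w j := by
  by_cases hd : Δ_[1] w j = 0
  · have hq0 : q (j + σ) = 0 := hq.eq_zero _ (by rw [add_sub_cancel_right, hd, mul_zero])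
    exact ⟨0, le_rfl, by simp, by simp [limitedIncrement, hd, hq0]⟩
  · set r := q (j + σ) * Δ_[1] w (j + σ) / Δ_[1] w j with hr
    have hr0 : 0 ≤ r := hq.downstream_mul_nonneg j
    have hκr : κ * (2 + r) ≤ 2 := by
      simpa only [add_sub_cancel_right, ← hr] using
        hbound (j + σ) (by rwa [add_sub_cancel_right])
    refine ⟨1 - q j / 2 + r / 2, by linarith [hq.le_two j], ?_, ?_⟩
    · linarith [mul_nonneg hκ (hq.nonneg j)]
    · rw [limitedIncrement, hr]
      field_simp

theorem sameRay_limitedIncrement (hq : IsUpwindLimiter σ q w) (j : ℤ) :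
    SameRay ℝ (Δ_[1] w j) (limitedIncrement σ q w j) := by
  obtain ⟨c, hc, -, h⟩ := hq.exists_limitedIncrement_eq_mul le_rfl (by simp) j
  rw [h]
  exact SameRay.sameRay_nonneg_smul_right _ hc

theorem sameRay_sub_mul_limitedIncrement (hq : IsUpwindLimiter σ q w) {κ : ℝ} (hκ : 0 ≤ κ)
    (hbound : ∀ j, Δ_[1] w (j - σ) ≠ 0 → κ * (2 + q j * Δ_[1] w j / Δ_[1] w (j - σ)) ≤ 2)
    (j : ℤ) :
    SameRay ℝ (Δ_[1] w j - κ * limitedIncrement σ q w j) (κ * limitedIncrement σ q w j) := by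
  obtain ⟨c, hc, hκc, h⟩ := hq.exists_limitedIncrement_eq_mul hκ hbound j
  have hsub : Δ_[1] w j - κ * limitedIncrement σ q w j = (1 - κ * c) • Δ_[1] w j := by
    rw [h, smul_eq_mul]; ring
  have hmul : κ * limitedIncrement σ q w j = (κ * c) • Δ_[1] w j := by
    rw [h, smul_eq_mul]; ring
  rw [hsub, hmul]
  exact ((SameRay.refl _).nonneg_smul_left (sub_nonneg.2 hκc)).nonneg_smul_right
    (mul_nonneg hκ hc)

theorem tsum_enorm_limitedIncrement_le (hq : IsUpwindLimiter σ q w) :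
    ∑' j, ‖limitedIncrement σ q w j‖ₑ ≤ TV w + TV w := by
  have pointwise (j : ℤ) :
      ‖limitedIncrement σ q w j‖ₑ ≤ ‖Δ_[1] w j‖ₑ + ‖Δ_[1] w (j + σ)‖ₑ := by
    have hself : |1 - q j / 2| ≤ 1 :=
      abs_le.2 ⟨by linarith [hq.le_two j], by linarith [hq.nonneg j]⟩
    have hdown : |q (j + σ) / 2| ≤ 1 :=
      abs_le.2 ⟨by linarith [hq.nonneg (j + σ)], by linarith [hq.le_two (j + σ)]⟩
    have hsplit : limitedIncrement σ q w j =
        (1 - q j / 2) * Δ_[1] w j + q (j + σ) / 2 * Δ_[1] w (j + σ) := by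
      rw [limitedIncrement]; ring
    rw [hsplit]
    refine (enorm_add_le _ _).trans (add_le_add ?_ ?_) <;> rw [enorm_mul]
    · exact mul_le_of_le_one_left' (by simpa [Real.enorm_eq_ofReal_abs] using hself)
    · exact mul_le_of_le_one_left' (by simpa [Real.enorm_eq_ofReal_abs] using hdown)
  calc ∑' j, ‖limitedIncrement σ q w j‖ₑ
      ≤ ∑' j, (‖Δ_[1] w j‖ₑ + ‖Δ_[1] w (j + σ)‖ₑ) := ENNReal.tsum_le_tsum pointwise
    _ = ∑' j, ‖Δ_[1] w j‖ₑ + ∑' j, ‖Δ_[1] w (Equiv.addRight σ j)‖ₑ := ENNReal.tsum_add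
    _ = TV w + TV w := by
      rw [(Equiv.addRight σ).tsum_eq (fun j => ‖Δ_[1] w j‖ₑ), TV_eq_tsum_enorm]

end IsUpwindLimiter

section TwoSided

variable {a : ℝ} {q w : ℤ → ℝ}

theorem sub_sign_of_neighbours (ha : a ≠ 0) {P : ℤ → Prop} {j : ℤ} (hleft : P (j - 1))
    (hright : P (j + 1)) : P (j - SignType.sign a) := by
  rcases ha.lt_or_gt with ha | ha
  · simpa [sign_neg ha] using hright
  · simpa [sign_pos ha] using hleft

theorem IsUpwindLimiter.of_two_sided (ha : a ≠ 0) (hrange : ∀ j, 0 ≤ q j ∧ q j ≤ 2)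
    (hzero : ∀ j, ((w (j + 1) - w j) * (w (j + 2) - w (j + 1)) ≤ 0 ∨
      (w (j + 1) - w j) * (w j - w (j - 1)) ≤ 0) → q j = 0) :
    IsUpwindLimiter (SignType.sign a) q w where
  nonneg j := (hrange j).1
  le_two j := (hrange j).2
  eq_zero j := by
    refine sub_sign_of_neighbours ha (P := fun i => Δ_[1] w j * Δ_[1] w i ≤ 0 → q j = 0) ?_ ?_
    · simpa [fwdDiff] using fun h => hzero j (Or.inr h)
    · simpa [fwdDiff, add_assoc] using fun h => hzero j (Or.inl h)

theorem upwind_bound_of_two_sided (ha : a ≠ 0) {κ : ℝ} (hκ : 0 < κ)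
    (hratio : ∀ j,
      (w (j + 2) - w (j + 1) ≠ 0 →
        q j * (w (j + 1) - w j) / (w (j + 2) - w (j + 1)) ≤ 2 / κ - 2) ∧
      (w j - w (j - 1) ≠ 0 → q j * (w (j + 1) - w j) / (w j - w (j - 1)) ≤ 2 / κ - 2))
    (j : ℤ) : Δ_[1] w (j - SignType.sign a) ≠ 0 →
      κ * (2 + q j * Δ_[1] w j / Δ_[1] w (j - SignType.sign a)) ≤ 2 := by
  have hclear (r : ℝ) : κ * (2 + r) ≤ 2 ↔ r ≤ 2 / κ - 2 := by
    rw [← le_div_iff₀' hκ, le_sub_iff_add_le']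
  simp only [hclear]
  refine sub_sign_of_neighbours ha
    (P := fun i => Δ_[1] w i ≠ 0 → q j * Δ_[1] w j / Δ_[1] w i ≤ 2 / κ - 2) ?_ ?_
  · simpa only [fwdDiff, sub_add_cancel] using (hratio j).2
  · simpa only [fwdDiff, add_assoc, one_add_one_eq_two] using (hratio j).1

end TwoSided

theorem yee_tvd_criterion_general (a lam θ : ℝ) (hlam : 0 ≤ lam) (hθ0 : 0 ≤ θ) (hθ1 : θ ≤ 1)
    (Q : (ℤ → ℝ) → ℤ → ℝ) (u v : ℤ → ℝ) (hfin : 0 < θ → TV v < ⊤)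
    (hu : IsUpwindLimiter (SignType.sign a) (Q u) u)
    (hv : 0 < θ → IsUpwindLimiter (SignType.sign a) (Q v) v)
    (hbound : ∀ j, Δ_[1] u (j - SignType.sign a) ≠ 0 →
      lam * (1 - θ) * |a| * (2 + Q u j * Δ_[1] u j / Δ_[1] u (j - SignType.sign a)) ≤ 2)
    (hscheme : ∀ j : ℤ, v j = u j
      - lam * (1 - θ) * (yeeFlux a Q u j - yeeFlux a Q u (j - 1))
      - lam * θ * (yeeFlux a Q v j - yeeFlux a Q v (j - 1))) :
    TV v ≤ TV u := by
  have hexpl : 0 ≤ lam * (1 - θ) * |a| := by have := sub_nonneg.2 hθ1; positivity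
  have himpl : 0 ≤ lam * θ * |a| := by positivity
  rw [TV_eq_tsum_enorm v, TV_eq_tsum_enorm u]
  refine tsum_enorm_le_of_telescoping (Equiv.subRight (SignType.sign a : ℤ))
    (F := fun j => lam * θ * |a| * limitedIncrement (SignType.sign a) (Q v) v j)
    (G := fun j => lam * (1 - θ) * |a| * limitedIncrement (SignType.sign a) (Q u) u j)
    ?aligned (hu.sameRay_sub_mul_limitedIncrement hexpl hbound) ?finite fun j => ?increments
  case aligned =>
    intro j
    rcases hθ0.eq_or_lt with rfl | hθ
    · simp
    · exact ((hv hθ).sameRay_limitedIncrement j).nonneg_smul_right himpl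
  case finite =>
    rcases hθ0.eq_or_lt with rfl | hθ
    · simp
    · have hTV := ENNReal.add_ne_top.2 ⟨(hfin hθ).ne, (hfin hθ).ne⟩
      simp only [enorm_mul (lam * θ * |a|), ENNReal.tsum_mul_left]
      exact ENNReal.mul_ne_top enorm_ne_top
        (ne_top_of_le_ne_top hTV (hv hθ).tsum_enorm_limitedIncrement_le)
  case increments =>
    have hfluxu := fwdDiff_yeeFlux_sub a Q u j
    have hfluxv := fwdDiff_yeeFlux_sub a Q v j
    simp only [fwdDiff, Equiv.subRight_apply] at hfluxu hfluxv ⊢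
    linear_combination hscheme (j + 1) - hscheme j - lam * (1 - θ) * hfluxu - lam * θ * hfluxv

/-- Yee's sufficient TVD criterion for symmetric-type fluxes: with `θ ∈ [0,1)`,
`λ|a| < 1/(1−θ)`, and `K = 2/(λ(1−θ)|a|) − 2`, if for each `w ∈ {u, v}` and all `j` the
limiter satisfies `0 ≤ Q_{j+1/2}(w) ≤ 2`, vanishes when neighbouring gradients have a
nonpositive product, and obeys the bounds `Q_{j+1/2}(w)·Δ_{j+1/2}w/Δ_{j±...}w ≤ K`, then
any θ-scheme solution `v` from `u` (with `TV(v) < ∞` when `θ > 0`) has `TV(v) ≤ TV(u)`. -/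
theorem yee_tvd_criterion (a lam θ : ℝ) (ha : a ≠ 0) (hlam : 0 < lam)
    (hθ0 : 0 ≤ θ) (hθ1 : θ < 1) (hCFL : lam * |a| < 1 / (1 - θ))
    (Q : (ℤ → ℝ) → ℤ → ℝ) (u v : ℤ → ℝ) (hfin : 0 < θ → TV v < ⊤)
    (hQ : ∀ w : ℤ → ℝ, (w = u ∨ w = v) → ∀ j : ℤ,
      (0 ≤ Q w j ∧ Q w j ≤ 2) ∧
      (((w (j + 1) - w j) * (w (j + 2) - w (j + 1)) ≤ 0 ∨
        (w (j + 1) - w j) * (w j - w (j - 1)) ≤ 0) → Q w j = 0) ∧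
      ((w (j + 2) - w (j + 1) ≠ 0 →
          Q w j * (w (j + 1) - w j) / (w (j + 2) - w (j + 1))
            ≤ 2 / (lam * (1 - θ) * |a|) - 2) ∧
       (w j - w (j - 1) ≠ 0 →
          Q w j * (w (j + 1) - w j) / (w j - w (j - 1))
            ≤ 2 / (lam * (1 - θ) * |a|) - 2)))
    (hscheme : ∀ j : ℤ, v j = u j
      - lam * (1 - θ) * (yeeFlux a Q u j - yeeFlux a Q u (j - 1))
      - lam * θ * (yeeFlux a Q v j - yeeFlux a Q v (j - 1))) :
    TV v ≤ TV u := by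
  have hlim w hw := IsUpwindLimiter.of_two_sided ha (fun j => (hQ w hw j).1)
    fun j => (hQ w hw j).2.1
  have hκ : 0 < lam * (1 - θ) * |a| := by have := sub_pos.2 hθ1; positivity
  exact yee_tvd_criterion_general a lam θ hlam.le hθ0 hθ1.le Q u v hfin (hlim u (.inl rfl))
    (fun _ => hlim v (.inr rfl))
    (upwind_bound_of_two_sided ha hκ fun j => (hQ u (.inl rfl) j).2.2) hscheme
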